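/- arXiv:2209.00418 — 2 statements merged into one kernel-verified Lean document; each statement's English description precedes it below -/
import Mathlib

section
/- For every increment function δ of size n and Dyck words P, Q of size n: if Q is the δ-rotation of P at some up step, then P < Q strictly in the Dyck lattice Dyck_n; consequently, if P ≤ Q in the alt-Tamari poset Tam^δ_n, then P ≤ Q in Dyck_n. -/
/-!
Common definitions.  A letter of a word is a `Bool`: `true` is an up step `u`,
`false` is a down step `d`.  Positions in words are 0-based.
-/

/-- A (possibly empty) Dyck word: as many `u`'s as `d`'s, and every
prefix has at least as many `u`'s as `d`'s. -/
def IsDyckPath (w : List Bool) : Prop :=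
  w.count true = w.count false ∧ ∀ p, p <+: w → p.count false ≤ p.count true

/-- A Dyck word of size `n`: `n` up steps, `n` down steps, every prefix has
at least as many `u`'s as `d`'s. -/
def IsDyckWord (n : ℕ) (w : List Bool) : Prop :=
  w.count true = n ∧ w.count false = n ∧ ∀ p, p <+: w → p.count false ≤ p.count true

/-- The set of Dyck words of size `n`. -/
def DyckSet (n : ℕ) : Set (List Bool) := {w | IsDyckWord n w}

/-- An increment function: a `{0,1}`-valued function (the paper's `δ : {1,…,n} → {0,1}`;
only the values on `{1,…,n}` are ever used). -/
def IsIncFun (δ : ℕ → ℤ) : Prop := ∀ i, δ i = 0 ∨ δ i = 1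

/-- The 0-based position in `w` of the `i`-th up step `u_i` (`i` is 1-based). -/
def upPos (w : List Bool) (i : ℕ) : ℕ :=
  ((List.range w.length).filter fun q => w.getD q false = true).getD (i - 1) 0

/-- `h_i(w)`: the (1-based, between 1 and 2n) position of the up step `u_i` in `w`. -/
def hpos (w : List Bool) (i : ℕ) : ℕ := upPos w i + 1

/-- The change of δ-altitude produced by the letter at position `q` of `w`:
the up step `u_i` contributes `δ i`, a down step contributes `-1`. -/
def stepVal (δ : ℕ → ℤ) (w : List Bool) (q : ℕ) : ℤ :=
  if w.getD q false = true then δ ((w.take (q + 1)).count true) else -1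

/-- The δ-elevation of the factor of `w` occupying positions `a, …, b-1`. -/
def elev (δ : ℕ → ℤ) (w : List Bool) (a b : ℕ) : ℤ :=
  ∑ q ∈ Finset.Ico a b, stepVal δ w q

/-- `C` is the δ-excursion of the up step of `w` at position `p`:
the smallest (nonempty) factor of `w` starting at `p` whose δ-elevation is `0`. -/
def IsDeltaExcAt (δ : ℕ → ℤ) (w : List Bool) (p : ℕ) (C : List Bool) : Prop :=
  w.getD p false = true ∧
  ∃ m, 0 < m ∧ p + m ≤ w.length ∧ C = (w.drop p).take m ∧
    elev δ w p (p + m) = 0 ∧ ∀ m', 0 < m' → m' < m → elev δ w p (p + m') ≠ 0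

/-- `C` is the excursion of the up step of `w` at position `p`: the smallest factor
of `w` starting at `p` that is itself a Dyck word. -/
def IsExcursionAt (w : List Bool) (p : ℕ) (C : List Bool) : Prop :=
  w.getD p false = true ∧
  ∃ m, 0 < m ∧ p + m ≤ w.length ∧ C = (w.drop p).take m ∧ IsDyckPath C ∧
    ∀ m', 0 < m' → m' < m → ¬ IsDyckPath ((w.drop p).take m')

/-- `ℓ_i(w; δ)`: the length of the δ-excursion of `u_i` in `w`. -/
noncomputable def excLen (δ : ℕ → ℤ) (w : List Bool) (i : ℕ) : ℕ :=
  sInf {m | 0 < m ∧ elev δ w (upPos w i) (upPos w i + m) = 0}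

/-- `Q` is the δ-rotation of `P` at some up step: `P = A d C B` with `d u_i` a valley
and `C` the δ-excursion of `u_i`, and `Q = A C d B`. -/
def DeltaRot (δ : ℕ → ℤ) (P Q : List Bool) : Prop :=
  ∃ A C B, P = A ++ false :: (C ++ B) ∧ Q = A ++ (C ++ false :: B) ∧
    IsDeltaExcAt δ P (A.length + 1) C

/-- The alt-Tamari order `Tam^δ`: reflexive transitive closure of δ-rotations. -/
def altLE (δ : ℕ → ℤ) : List Bool → List Bool → Prop :=
  Relation.ReflTransGen (DeltaRot δ)

/-- The Tamari order: the alt-Tamari order for `δ ≡ 1` (the δ-excursion of any up step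
is then its excursion). -/
def tamLE : List Bool → List Bool → Prop := altLE fun _ => 1

/-- The height (number of `u`'s minus number of `d`'s) of the length-`j` prefix of `w`. -/
def prefHeight (w : List Bool) (j : ℕ) : ℤ :=
  ((w.take j).count true : ℤ) - ((w.take j).count false : ℤ)

/-- The Dyck (inclusion) order: every prefix height of `P` is at most that of `Q`. -/
def dyckLE (P Q : List Bool) : Prop := ∀ j, prefHeight P j ≤ prefHeight Q j

/-- Strict version of a relation `le`. -/
def ltOf (le : List Bool → List Bool → Prop) (P Q : List Bool) : Prop :=
  le P Q ∧ ¬ le Q P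

/-- There is a strict chain `P = c 0 < c 1 < ⋯ < c k = Q` inside `S`. -/
def HasChainIn (S : Set (List Bool)) (le : List Bool → List Bool → Prop)
    (P Q : List Bool) (k : ℕ) : Prop :=
  ∃ c : ℕ → List Bool, c 0 = P ∧ c k = Q ∧ (∀ i ≤ k, c i ∈ S) ∧
    ∀ i < k, ltOf le (c i) (c (i + 1))

/-- The interval `[P,Q]` of the poset `(S, le)` has height `k`: `k` is the maximal
length of a chain from `P` to `Q`. -/
def IntervalHeight (S : Set (List Bool)) (le : List Bool → List Bool → Prop)
    (P Q : List Bool) (k : ℕ) : Prop :=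
  HasChainIn S le P Q k ∧ ∀ m, HasChainIn S le P Q m → m ≤ k

/-- The interval `[P,Q]` of the poset `(S, le)` is linear: it is totally ordered. -/
def LinearInterval (S : Set (List Bool)) (le : List Bool → List Bool → Prop)
    (P Q : List Bool) : Prop :=
  P ∈ S ∧ Q ∈ S ∧ le P Q ∧
  ∀ R R', R ∈ S → R' ∈ S → le P R → le R Q → le P R' → le R' Q → le R R' ∨ le R' R

/-- `Q` covers `P` in the poset `(S, le)`. -/
def CovIn (S : Set (List Bool)) (le : List Bool → List Bool → Prop)
    (P Q : List Bool) : Prop :=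
  P ∈ S ∧ Q ∈ S ∧ ltOf le P Q ∧ ∀ R ∈ S, ¬ (ltOf le P R ∧ ltOf le R Q)

/-- The number of valleys (factors `du`) of `w`. -/
def valleys (w : List Bool) : ℕ :=
  ((List.range w.length).filter fun q => !w.getD q true && w.getD (q + 1) false).length

theorem dyckLE.refl (w : List Bool) : dyckLE w w := fun _ => le_rfl

theorem dyckLE.trans {P Q R : List Bool} (h₁ : dyckLE P Q) (h₂ : dyckLE Q R) : dyckLE P R :=
  fun j => (h₁ j).trans (h₂ j)

theorem prefHeight_zero (w : List Bool) : prefHeight w 0 = 0 := by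
  simp [prefHeight]

theorem prefHeight_cons_succ (a : Bool) (w : List Bool) (j : ℕ) :
    prefHeight (a :: w) (j + 1) = (if a then 1 else -1) + prefHeight w j := by
  cases a <;> simp [prefHeight] <;> ring

theorem dyckLE.cons (a : Bool) {P Q : List Bool} (h : dyckLE P Q) :
    dyckLE (a :: P) (a :: Q) := by
  rintro (_ | j)
  · simp [prefHeight_zero]
  · simpa [prefHeight_cons_succ] using h j

theorem dyckLE.append_left (A : List Bool) {P Q : List Bool} (h : dyckLE P Q) :
    dyckLE (A ++ P) (A ++ Q) := by
  induction A with
  | nil => exact h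
  | cons a A ih => exact ih.cons a

/-- Exchanging a down step with the letter that follows it raises the path. -/
theorem dyckLE_swap (c : Bool) (w : List Bool) :
    dyckLE (false :: c :: w) (c :: false :: w) := by
  rintro (_ | _ | j)
  · simp [prefHeight_zero]
  · cases c <;> simp [prefHeight_cons_succ, prefHeight_zero]
  · cases c <;> simp [prefHeight_cons_succ]

/-- Moving a down step to the right, past any factor, raises the path. -/
theorem dyckLE_move_down (C B : List Bool) :
    dyckLE (false :: (C ++ B)) (C ++ false :: B) := by
  induction C with
  | nil => exact dyckLE.refl _
  | cons c C ih => exact (dyckLE_swap c (C ++ B)).trans (ih.cons c)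

theorem DeltaRot.dyckLE {δ : ℕ → ℤ} {P Q : List Bool} (h : DeltaRot δ P Q) : dyckLE P Q := by
  obtain ⟨A, C, B, rfl, rfl, -⟩ := h
  exact (dyckLE_move_down C B).append_left A

theorem DeltaRot.ne {δ : ℕ → ℤ} {P Q : List Bool} (h : DeltaRot δ P Q) : P ≠ Q := by
  obtain ⟨A, C, B, rfl, rfl, hup, m, hm, hlen, hC, -⟩ := h
  intro heq
  have heq := List.append_cancel_left heq
  cases C with
  | nil =>
    have := congrArg List.length hC
    simp only [List.length_nil, List.length_take, List.length_drop] at this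
    omega
  | cons c C =>
    obtain rfl : false = c := by simpa using (List.cons.inj heq).1
    simp at hup

theorem altLE.dyckLE {δ : ℕ → ℤ} {P Q : List Bool} (h : altLE δ P Q) : dyckLE P Q := by
  induction h with
  | refl => exact dyckLE.refl _
  | tail _ hrot ih => exact ih.trans hrot.dyckLE

/-- a δ-rotation increases strictly in the Dyck order; consequently the
Dyck order refines the alt-Tamari order. -/
theorem stmt6 (n : ℕ) (δ : ℕ → ℤ) (hδ : IsIncFun δ) :
    (∀ P Q : List Bool, IsDyckWord n P → IsDyckWord n Q →
      DeltaRot δ P Q → dyckLE P Q ∧ P ≠ Q) ∧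
    (∀ P Q : List Bool, IsDyckWord n P → IsDyckWord n Q →
      altLE δ P Q → dyckLE P Q) := by
  exact ⟨fun _ _ _ _ h => ⟨h.dyckLE, h.ne⟩, fun _ _ _ _ h => h.dyckLE⟩
end

section
/- Let δ be an increment function of size n and let P ≤ Q in the alt-Tamari poset Tam^δ_n. Then for every 1 ≤ i ≤ n one has h_i(Q) ≤ h_i(P) and ℓ_i(Q;δ) ≥ ℓ_i(P;δ). -/
theorem upPos_eq_of_count_take {w : List Bool} {p i : ℕ} (hp : w.getD p false = true)
    (hi : (w.take p).count true + 1 = i) : upPos w i = p := by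
  have hlen : p < w.length := by
    by_contra h
    rw [List.getD_eq_default _ _ (by omega)] at hp
    exact absurd hp (by simp)
  have hcount : ∀ k, k ≤ w.length →
      ((List.range k).filter fun q => w.getD q false = true).length = (w.take k).count true := by
    intro k
    induction k with
    | zero => simp
    | succ k ih =>
      intro hk
      rw [List.range_succ, List.filter_append, List.length_append, ih (by omega),
        List.take_add_one, List.count_append]
      have hget : w[k]? = some w[k] := List.getElem?_eq_getElem (by omega)
      cases hb : w[k] <;> simp [hget, hb]
  obtain ⟨r, hr⟩ : ∃ r, w.length = p + (r + 1) := ⟨w.length - p - 1, by omega⟩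
  unfold upPos
  rw [hr, List.range_add, List.range_succ_eq_map, List.map_cons, List.filter_append,
    List.filter_cons_of_pos (by simpa using hp), List.getD_append_right]
  · rw [hcount p hlen.le, show i - 1 - (w.take p).count true = 0 by omega]
    simp
  · rw [hcount p hlen.le]
    omega

theorem exists_count_take {w : List Bool} {i : ℕ} (h1 : 1 ≤ i) (hi : i ≤ w.count true) :
    ∃ p, w.getD p false = true ∧ (w.take p).count true + 1 = i := by
  induction w generalizing i with
  | nil => simp at hi; omega
  | cons b w ih =>
    cases b with
    | false =>
      obtain ⟨p, hp, hc⟩ := ih h1 (by simpa using hi)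
      exact ⟨p + 1, by simpa using hp, by simpa using hc⟩
    | true =>
      rcases Nat.eq_or_lt_of_le h1 with rfl | h
      · exact ⟨0, by simp, by simp⟩
      · obtain ⟨p, hp, hc⟩ := ih (i := i - 1) (by omega)
          (by simp only [List.count_cons_self] at hi; omega)
        exact ⟨p + 1, by simpa using hp, by
          simp only [List.take_succ_cons, List.count_cons_self]
          omega⟩

theorem elev_add_elev (δ : ℕ → ℤ) (w : List Bool) {a b c : ℕ} (hab : a ≤ b) (hbc : b ≤ c) :
    elev δ w a b + elev δ w b c = elev δ w a c :=
  Finset.sum_Ico_consecutive _ hab hbc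

theorem elev_succ (δ : ℕ → ℤ) (w : List Bool) {a b : ℕ} (hab : a ≤ b) :
    elev δ w a (b + 1) = elev δ w a b + stepVal δ w b :=
  Finset.sum_Ico_succ_top hab _

theorem neg_one_le_stepVal {δ : ℕ → ℤ} (hδ : IsIncFun δ) (w : List Bool) (q : ℕ) :
    -1 ≤ stepVal δ w q := by
  unfold stepVal
  split
  · rcases hδ ((w.take (q + 1)).count true) with h | h <;> omega
  · rfl

theorem stepVal_nonneg {δ : ℕ → ℤ} (hδ : IsIncFun δ) {w : List Bool} {q : ℕ}
    (hq : w.getD q false = true) : 0 ≤ stepVal δ w q := by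
  unfold stepVal
  rw [if_pos hq]
  rcases hδ ((w.take (q + 1)).count true) with h | h <;> omega

/-- Since the elevation starts at a nonnegative value and decreases by at most one at each step,
it vanishes no later than it becomes nonpositive. -/
theorem exists_elev_eq_zero {δ : ℕ → ℤ} (hδ : IsIncFun δ) {w : List Bool} {p m : ℕ}
    (hp : w.getD p false = true) (hm : 0 < m) (h : elev δ w p (p + m) ≤ 0) :
    ∃ k, 0 < k ∧ k ≤ m ∧ elev δ w p (p + k) = 0 := by
  induction m with
  | zero => omega
  | succ m ih =>
    have hs := elev_succ δ w (Nat.le_add_right p m)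
    rw [← add_assoc] at h
    rcases Nat.eq_zero_or_pos m with rfl | hm'
    · have h0 := stepVal_nonneg hδ hp
      refine ⟨1, by omega, by omega, ?_⟩
      simp only [elev, add_zero, Finset.Ico_self, Finset.sum_empty] at hs h ⊢
      omega
    · by_cases hle : elev δ w p (p + m) ≤ 0
      · obtain ⟨k, hk, hkm, hk0⟩ := ih hm' hle
        exact ⟨k, hk, by omega, hk0⟩
      · have := neg_one_le_stepVal hδ w (p + m)
        refine ⟨m + 1, by omega, le_rfl, ?_⟩
        rw [← add_assoc]
        omega

theorem exists_pos_elev_eq_zero {δ : ℕ → ℤ} (hδ : IsIncFun δ) {w : List Bool} {p : ℕ}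
    (hp : w.getD p false = true) : ∃ m, 0 < m ∧ elev δ w p (p + m) = 0 := by
  have hdesc : ∀ t, elev δ w p (p + w.length + t) = elev δ w p (p + w.length) - t := by
    intro t
    induction t with
    | zero => simp
    | succ t ih =>
      rw [← add_assoc, elev_succ δ w (by omega), ih]
      have : stepVal δ w (p + w.length + t) = -1 := by
        unfold stepVal
        rw [List.getD_eq_default _ _ (by omega)]
        simp
      push_cast
      omega
  have hle := hdesc ((elev δ w p (p + w.length)).toNat + 1)
  obtain ⟨k, hk, -, hk0⟩ := exists_elev_eq_zero hδ hp
    (m := w.length + ((elev δ w p (p + w.length)).toNat + 1)) (by omega)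
    (by rw [← add_assoc]; omega)
  exact ⟨k, hk, hk0⟩

theorem excLen_le {δ : ℕ → ℤ} (hδ : IsIncFun δ) {w : List Bool} {i m : ℕ}
    (hp : w.getD (upPos w i) false = true) (hm : 0 < m)
    (h : elev δ w (upPos w i) (upPos w i + m) ≤ 0) : excLen δ w i ≤ m := by
  obtain ⟨k, hk, hkm, hk0⟩ := exists_elev_eq_zero hδ hp hm h
  exact le_trans (Nat.sInf_le (show k ∈ {m | _} from ⟨hk, hk0⟩)) hkm

section Rotation

variable {A B C : List Bool}

theorem getD_move_of_lt {q : ℕ} (hq : q < A.length) :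
    (A ++ (C ++ false :: B)).getD q false = (A ++ false :: (C ++ B)).getD q false := by
  rw [List.getD_append _ _ _ _ hq, List.getD_append _ _ _ _ hq]

theorem getD_move_of_mem {q : ℕ} (h1 : A.length ≤ q) (h2 : q < A.length + C.length) :
    (A ++ (C ++ false :: B)).getD q false = (A ++ false :: (C ++ B)).getD (q + 1) false := by
  rw [List.getD_append_right _ _ _ _ h1, List.getD_append_right A _ _ _ (by omega),
    List.getD_append C _ _ _ (by omega), show q + 1 - A.length = q - A.length + 1 by omega,
    List.getD_cons_succ, List.getD_append C _ _ _ (by omega)]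

theorem getD_move_of_gt {q : ℕ} (h : A.length + C.length < q) :
    (A ++ (C ++ false :: B)).getD q false = (A ++ false :: (C ++ B)).getD q false := by
  obtain ⟨r, rfl⟩ := Nat.exists_eq_add_of_lt h
  rw [List.getD_append_right _ _ _ _ (by omega), List.getD_append_right _ _ _ _ (by omega),
    List.getD_append_right _ _ _ _ (by omega),
    show A.length + C.length + r + 1 - A.length = C.length + r + 1 by omega,
    List.getD_cons_succ, List.getD_append_right _ _ _ _ (by omega),
    show C.length + r + 1 - C.length = r + 1 by omega, List.getD_cons_succ]
  congr 1
  omega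

theorem count_take_move_of_le {q : ℕ} (hq : q ≤ A.length) :
    ((A ++ (C ++ false :: B)).take q).count true =
      ((A ++ false :: (C ++ B)).take q).count true := by
  rw [List.take_append_of_le_length hq, List.take_append_of_le_length hq]

theorem count_take_move_of_mem {q : ℕ} (h1 : A.length ≤ q) (h2 : q ≤ A.length + C.length) :
    ((A ++ (C ++ false :: B)).take q).count true =
      ((A ++ false :: (C ++ B)).take (q + 1)).count true := by
  obtain ⟨r, rfl⟩ := Nat.exists_eq_add_of_le h1
  rw [List.take_length_add_append, add_assoc, List.take_length_add_append, List.take_succ_cons,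
    List.take_append_of_le_length (by omega), List.take_append_of_le_length (by omega)]
  simp

theorem count_take_move_of_gt {q : ℕ} (h : A.length + C.length < q) :
    ((A ++ (C ++ false :: B)).take q).count true =
      ((A ++ false :: (C ++ B)).take q).count true := by
  obtain ⟨r, rfl⟩ := Nat.exists_eq_add_of_lt h
  rw [show A.length + C.length + r + 1 = A.length + (C.length + (r + 1)) by ring,
    List.take_length_add_append, List.take_length_add_append, List.take_length_add_append,
    ← add_assoc, List.take_succ_cons, List.take_succ_cons, List.take_length_add_append]
  simp

theorem stepVal_move_of_lt (δ : ℕ → ℤ) {q : ℕ} (hq : q < A.length) :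
    stepVal δ (A ++ (C ++ false :: B)) q = stepVal δ (A ++ false :: (C ++ B)) q := by
  unfold stepVal
  rw [getD_move_of_lt hq, count_take_move_of_le hq]

theorem stepVal_move_of_mem (δ : ℕ → ℤ) {q : ℕ} (h1 : A.length ≤ q)
    (h2 : q < A.length + C.length) :
    stepVal δ (A ++ (C ++ false :: B)) q = stepVal δ (A ++ false :: (C ++ B)) (q + 1) := by
  unfold stepVal
  rw [getD_move_of_mem h1 h2, count_take_move_of_mem (by omega) h2]

theorem stepVal_move_of_gt (δ : ℕ → ℤ) {q : ℕ} (h : A.length + C.length < q) :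
    stepVal δ (A ++ (C ++ false :: B)) q = stepVal δ (A ++ false :: (C ++ B)) q := by
  unfold stepVal
  rw [getD_move_of_gt h, count_take_move_of_gt (by omega)]

theorem stepVal_length_append_false (δ : ℕ → ℤ) (X Y : List Bool) :
    stepVal δ (X ++ false :: Y) X.length = -1 := by
  unfold stepVal
  rw [List.getD_append_right _ _ _ _ le_rfl]
  simp

theorem elev_move_of_le (δ : ℕ → ℤ) {k : ℕ} (hk : k ≤ A.length) :
    elev δ (A ++ (C ++ false :: B)) 0 k = elev δ (A ++ false :: (C ++ B)) 0 k :=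
  Finset.sum_congr rfl fun q hq => stepVal_move_of_lt δ (by
    have := Finset.mem_Ico.1 hq
    omega)

theorem elev_move_of_mem (δ : ℕ → ℤ) {k : ℕ} (h1 : A.length ≤ k)
    (h2 : k ≤ A.length + C.length) :
    elev δ (A ++ (C ++ false :: B)) 0 k = elev δ (A ++ false :: (C ++ B)) 0 (k + 1) + 1 := by
  induction k, h1 using Nat.le_induction with
  | base =>
    rw [elev_succ δ _ (Nat.zero_le _), stepVal_length_append_false, elev_move_of_le δ le_rfl]
    ring
  | succ k hk ih =>
    rw [elev_succ δ _ (Nat.zero_le _), elev_succ δ _ (Nat.zero_le (k + 1)), ih (by omega),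
      stepVal_move_of_mem δ hk (by omega)]
    ring

theorem elev_move_of_gt (δ : ℕ → ℤ) {k : ℕ} (h : A.length + C.length + 1 ≤ k) :
    elev δ (A ++ (C ++ false :: B)) 0 k = elev δ (A ++ false :: (C ++ B)) 0 k := by
  induction k, h using Nat.le_induction with
  | base =>
    have hd := stepVal_length_append_false δ (A ++ C) B
    rw [List.append_assoc, List.length_append] at hd
    rw [elev_succ δ _ (Nat.zero_le _), hd, elev_move_of_mem δ (by omega) le_rfl]
    ring
  | succ k hk ih =>
    rw [elev_succ δ _ (Nat.zero_le _), elev_succ δ _ (Nat.zero_le k), ih,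
      stepVal_move_of_gt δ (by omega)]

end Rotation

theorem DeltaRot.count_true_eq {δ : ℕ → ℤ} {P Q : List Bool} (h : DeltaRot δ P Q) :
    Q.count true = P.count true := by
  obtain ⟨A, C, B, rfl, rfl, -⟩ := h
  simp

theorem DeltaRot.upPos_le_and_excLen_le {δ : ℕ → ℤ} (hδ : IsIncFun δ) {P Q : List Bool}
    (h : DeltaRot δ P Q) {i : ℕ} (h1 : 1 ≤ i) (hi : i ≤ P.count true) :
    upPos Q i ≤ upPos P i ∧ excLen δ P i ≤ excLen δ Q i := by
  obtain ⟨A, C, B, hP, hQ, hu, c, hc, hcl, hC, hC0, hCmin⟩ := h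
  obtain ⟨p, hp, hpi⟩ := exists_count_take h1 hi
  have hCc : C.length = c := by
    rw [hC, List.length_take, List.length_drop]
    omega
  have hPp : upPos P i = p := upPos_eq_of_count_take hp hpi
  have hpA : p ≠ A.length := by
    rintro rfl
    rw [hP, List.getD_append_right _ _ _ _ le_rfl] at hp
    simp at hp
  have hsplit : ∀ w a b, a ≤ b → elev δ w a b = elev δ w 0 b - elev δ w 0 a := by
    intro w a b hab
    have := elev_add_elev δ w (Nat.zero_le a) hab
    omega
  have hle : ∀ k, k ≤ A.length → elev δ Q 0 k = elev δ P 0 k := by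
    intro k hk; rw [hP, hQ]; exact elev_move_of_le δ hk
  have hmem : ∀ k, A.length ≤ k → k ≤ A.length + c → elev δ Q 0 k = elev δ P 0 (k + 1) + 1 := by
    intro k hk hk'; rw [hP, hQ]; exact elev_move_of_mem δ hk (by omega)
  have hgt : ∀ k, A.length + c + 1 ≤ k → elev δ Q 0 k = elev δ P 0 k := by
    intro k hk; rw [hP, hQ]; exact elev_move_of_gt δ (by omega)
  obtain ⟨q, hqp, hq, hqi, key⟩ : ∃ q, q ≤ p ∧ Q.getD q false = true ∧
      (Q.take q).count true + 1 = i ∧ ∀ m, 0 < m → elev δ Q q (q + m) = 0 →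
        ∃ k, 0 < k ∧ k ≤ m ∧ elev δ P p (p + k) ≤ 0 := by
    rcases lt_or_gt_of_ne hpA with hlt | hgtA
    · refine ⟨p, le_rfl, ?_, ?_, fun m hm h0 => ⟨m, hm, le_rfl, ?_⟩⟩
      · rw [hQ, getD_move_of_lt hlt, ← hP, hp]
      · rw [hQ, count_take_move_of_le hlt.le, ← hP, hpi]
      · rw [hsplit _ _ _ (by omega)] at h0 ⊢
        rw [hle p hlt.le] at h0
        by_cases hm1 : p + m ≤ A.length
        · rw [hle _ hm1] at h0
          omega
        by_cases hm2 : p + m ≤ A.length + c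
        · rw [hmem _ (by omega) hm2, elev_succ δ P (Nat.zero_le _)] at h0
          have := neg_one_le_stepVal hδ P (p + m)
          omega
        · rw [hgt _ (by omega)] at h0
          omega
    · by_cases hpc : p ≤ A.length + c
      · obtain ⟨q, rfl⟩ : ∃ q, p = q + 1 := ⟨p - 1, by omega⟩
        refine ⟨q, by omega, ?_, ?_, fun m hm h0 => ?_⟩
        · rw [hQ, getD_move_of_mem (by omega) (by omega), ← hP, hp]
        · rw [hQ, count_take_move_of_mem (by omega) (by omega), ← hP, hpi]
        · by_cases hmq : q + m ≤ A.length + c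
          · refine ⟨m, hm, le_rfl, ?_⟩
            rw [hsplit _ _ _ (by omega)] at h0 ⊢
            rw [hmem _ (by omega) hmq, hmem q (by omega) (by omega)] at h0
            rw [add_right_comm]
            omega
          · refine ⟨A.length + c - q, by omega, by omega, ?_⟩
            rw [show q + 1 + (A.length + c - q) = A.length + 1 + c by omega]
            have hsum := elev_add_elev δ P (a := A.length + 1) (b := q + 1)
              (c := A.length + 1 + c) (by omega) (by omega)
            obtain ⟨r, rfl⟩ := Nat.exists_eq_add_of_le (show A.length ≤ q by omega)
            by_contra hpos
            obtain ⟨k, hk, hkr, hk0⟩ : ∃ k, 0 < k ∧ k ≤ r ∧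
                elev δ P (A.length + 1) (A.length + 1 + k) = 0 := by
              refine exists_elev_eq_zero hδ hu ?_ (by rw [add_right_comm]; omega)
              rcases Nat.eq_zero_or_pos r with rfl | hr
              · exact absurd hC0.le hpos
              · exact hr
            exact hCmin k hk (by omega) hk0
      · refine ⟨p, le_rfl, ?_, ?_, fun m hm h0 => ⟨m, hm, le_rfl, ?_⟩⟩
        · rw [hQ, getD_move_of_gt (by omega), ← hP, hp]
        · rw [hQ, count_take_move_of_gt (by omega), ← hP, hpi]
        · rw [hsplit _ _ _ (by omega)] at h0 ⊢
          rw [hgt p (by omega), hgt _ (by omega)] at h0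
          omega
  have hQq : upPos Q i = q := upPos_eq_of_count_take hq hqi
  refine ⟨by omega, le_csInf ?_ ?_⟩
  · rw [hQq]
    exact exists_pos_elev_eq_zero hδ hq
  · rintro m ⟨hm, hm0⟩
    rw [hQq] at hm0
    obtain ⟨k, hk, hkm, hk0⟩ := key m hm hm0
    exact (excLen_le hδ (by rwa [hPp]) hk (by rwa [hPp])).trans hkm

/-- along the alt-Tamari order, the positions `h_i` weakly decrease and
the δ-excursion lengths `ℓ_i` weakly increase. -/
theorem stmt9 (n : ℕ) (δ : ℕ → ℤ) (hδ : IsIncFun δ) (P Q : List Bool)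
    (hP : IsDyckWord n P) (hQ : IsDyckWord n Q) (hPQ : altLE δ P Q) :
    ∀ i, 1 ≤ i → i ≤ n → hpos Q i ≤ hpos P i ∧ excLen δ P i ≤ excLen δ Q i := by
  have hcount : ∀ R, altLE δ P R → R.count true = n := by
    intro R hR
    induction hR with
    | refl => exact hP.1
    | tail _ hrot ih => rw [hrot.count_true_eq, ih]
  intro i h1 hi
  suffices upPos Q i ≤ upPos P i ∧ excLen δ P i ≤ excLen δ Q i from
    ⟨Nat.succ_le_succ this.1, this.2⟩
  clear hQ
  induction hPQ with
  | refl => exact ⟨le_rfl, le_rfl⟩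
  | tail hPR hrot ih =>
    have hstep := hrot.upPos_le_and_excLen_le hδ h1 (hi.trans (hcount _ hPR).ge)
    exact ⟨hstep.1.trans ih.1, ih.2.trans hstep.2⟩
end
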